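/- arXiv:1307.1804 — 2 statements merged into one kernel-verified Lean document; each statement's English description precedes it below -/
import Mathlib

section
/- Let k be a commutative ring, R a commutative k-algebra, B an R-algebra whose underlying R-module is finitely presented, N a (B,R)-dimodule, and S a flat commutative R-algebra. Then the canonical map Cent_R(B,N) ⊗_R S → Cent_S(B⊗_R S, N⊗_R S), sending χ ⊗ s to the map (b ⊗ t) ↦ χ(b) ⊗ st, is an isomorphism of S-modules. -/
open TensorProduct

/-- The `R`-submodule of `Hom_R(B,N)` consisting of the centroidal transformations
of the `R`-algebra `B` (multiplication `mul`) with values in the `(B,R)`-dimodule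
`N` (left action `lact`, right action `ract`). -/
def centSubmodule {R B N : Type*} [CommRing R]
    [AddCommGroup B] [Module R B] [AddCommGroup N] [Module R N]
    (mul : B →ₗ[R] B →ₗ[R] B)
    (lact : B →ₗ[R] N →ₗ[R] N) (ract : N →ₗ[R] B →ₗ[R] N) :
    Submodule R (B →ₗ[R] N) where
  carrier := {χ | ∀ b₁ b₂ : B,
    χ (mul b₁ b₂) = ract (χ b₁) b₂ ∧ χ (mul b₁ b₂) = lact b₁ (χ b₂)}
  add_mem' := by
    intro f g hf hg b₁ b₂
    constructor
    · simp only [LinearMap.add_apply, (hf b₁ b₂).1, (hg b₁ b₂).1, map_add,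
        LinearMap.add_apply]
    · simp only [LinearMap.add_apply, (hf b₁ b₂).2, (hg b₁ b₂).2, map_add]
  zero_mem' := by intro b₁ b₂; simp
  smul_mem' := by
    intro c f hf b₁ b₂
    constructor
    · simp only [LinearMap.smul_apply, (hf b₁ b₂).1, map_smul, LinearMap.smul_apply]
    · simp only [LinearMap.smul_apply, (hf b₁ b₂).2, map_smul]

/-- Flat base change of a finite intersection of kernels. -/
theorem flat_kernel_aux {R M N S ι : Type*} [CommRing R] [AddCommGroup M] [Module R M]
    [AddCommGroup N] [Module R N] [CommRing S] [Algebra R S] [Module.Flat R S]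
    [Finite ι] (p : Submodule R M) (φ : ι → M →ₗ[R] N)
    (hp : ∀ x, x ∈ p ↔ ∀ i, φ i x = 0) (x : S ⊗[R] M)
    (hx : ∀ i, (φ i).baseChange S x = 0) : ∃ y, p.subtype.baseChange S y = x := by
  classical
  have := Fintype.ofFinite ι
  have hex : Function.Exact p.subtype (LinearMap.pi φ) := by
    intro m
    simp only [Submodule.subtype_apply, Set.mem_range, Subtype.exists, exists_prop,
      exists_eq_right, hp]
    exact funext_iff
  have h2 := Module.Flat.lTensor_exact S hex
  refine (h2 x).1 ?_
  apply (TensorProduct.piRight R R S (fun _ : ι => N)).injective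
  rw [map_zero]
  funext i
  have key : ((LinearMap.proj i : (ι → S ⊗[R] N) →ₗ[R] _) ∘ₗ
      (TensorProduct.piRight R R S (fun _ : ι => N)).toLinearMap ∘ₗ
      (LinearMap.pi φ).lTensor S) = (φ i).lTensor S := by
    ext s m
    simp
  exact (LinearMap.congr_fun key x).trans (hx i)

/-- Two bilinear maps agreeing on a generating set agree. -/
theorem bilin_ext_aux {R B N : Type*} [CommRing R] [AddCommGroup B] [Module R B]
    [AddCommGroup N] [Module R N] (s : Set B) (hs : Submodule.span R s = ⊤)
    (f g : B →ₗ[R] B →ₗ[R] N) (h : ∀ a ∈ s, ∀ b ∈ s, f a b = g a b) : f = g :=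
  LinearMap.ext_on hs fun a ha => LinearMap.ext_on hs fun b hb => h a ha b hb

/-- Let `R` be a commutative `k`-algebra, `B` an `R`-algebra whose
underlying `R`-module is finitely presented, `N` a `(B,R)`-dimodule, and `S` a flat
commutative `R`-algebra.  Then the canonical map
`Cent_R(B,N) ⊗_R S → Cent_S(B ⊗_R S, N ⊗_R S)`, `χ ⊗ s ↦ (b ⊗ t ↦ χ(b) ⊗ st)`,
is an isomorphism of `S`-modules; formalized: the composite `S`-linear map
`S ⊗[R] Cent_R(B,N) → S ⊗[R] Hom_R(B,N) → Hom_S(B_S, N_S)` is injective with range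
exactly `Cent_S(B_S, N_S)`. -/
theorem stmt_7 {k R B N S : Type*} [CommRing k] [CommRing R] [Algebra k R]
    [AddCommGroup B] [Module R B] [Module.FinitePresentation R B]
    [AddCommGroup N] [Module R N]
    [CommRing S] [Algebra R S] [Module.Flat R S]
    (mulB : B →ₗ[R] B →ₗ[R] B)
    (lactN : B →ₗ[R] N →ₗ[R] N) (ractN : N →ₗ[R] B →ₗ[R] N)
    (mulBS : (S ⊗[R] B) →ₗ[S] (S ⊗[R] B) →ₗ[S] (S ⊗[R] B))
    (hmulBS : ∀ (s₁ s₂ : S) (b₁ b₂ : B),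
      mulBS (s₁ ⊗ₜ b₁) (s₂ ⊗ₜ b₂) = (s₁ * s₂) ⊗ₜ (mulB b₁ b₂))
    (lactS : (S ⊗[R] B) →ₗ[S] (S ⊗[R] N) →ₗ[S] (S ⊗[R] N))
    (hlactS : ∀ (s₁ s₂ : S) (b : B) (n : N),
      lactS (s₁ ⊗ₜ b) (s₂ ⊗ₜ n) = (s₁ * s₂) ⊗ₜ (lactN b n))
    (ractS : (S ⊗[R] N) →ₗ[S] (S ⊗[R] B) →ₗ[S] (S ⊗[R] N))
    (hractS : ∀ (s₁ s₂ : S) (n : N) (b : B),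
      ractS (s₁ ⊗ₜ n) (s₂ ⊗ₜ b) = (s₁ * s₂) ⊗ₜ (ractN n b))
    (ω : (S ⊗[R] (B →ₗ[R] N)) →ₗ[S] ((S ⊗[R] B) →ₗ[S] (S ⊗[R] N)))
    (hω : ∀ (s t : S) (χ : B →ₗ[R] N) (b : B),
      ω (s ⊗ₜ χ) (t ⊗ₜ b) = (s * t) ⊗ₜ χ b) :
    Function.Injective
      (ω ∘ₗ ((centSubmodule mulB lactN ractN).subtype.baseChange S)) ∧
    Set.range
      ⇑(ω ∘ₗ ((centSubmodule mulB lactN ractN).subtype.baseChange S)) =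
      {g : (S ⊗[R] B) →ₗ[S] (S ⊗[R] N) |
        ∀ u v : S ⊗[R] B,
          g (mulBS u v) = ractS (g u) v ∧ g (mulBS u v) = lactS u (g v)} := by
  have hωbij : Function.Bijective ω := by
    have hb := Module.FinitePresentation.isBaseChange_map (M := B) (N := N) R S
    have : ⇑ω = ⇑hb.equiv := by
      have : ω = hb.equiv.toLinearMap := by
        refine TensorProduct.AlgebraTensorModule.ext fun s χ => ?_
        refine TensorProduct.AlgebraTensorModule.ext fun t b => ?_
        simp [hω, IsBaseChange.equiv_tmul, TensorProduct.smul_tmul']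
      rw [this]; rfl
    rw [this]
    exact hb.equiv.bijective
  refine ⟨?_, ?_⟩
  · rw [LinearMap.coe_comp]
    exact hωbij.1.comp (Module.Flat.lTensor_preserves_injective_linearMap _
      (Submodule.injective_subtype _))
  ext g
  constructor
  · rintro ⟨y, rfl⟩ u v
    induction y with
    | zero => simp
    | add y z hy hz =>
      simp only [map_add, LinearMap.add_apply]
      exact ⟨by rw [hy.1, hz.1], by rw [hy.2, hz.2]⟩
    | tmul s χ =>
      obtain ⟨χ, hχ⟩ := χ
      simp only [LinearMap.comp_apply, LinearMap.baseChange_tmul, Submodule.subtype_apply]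
      induction u with
      | zero => simp
      | add y z hy hz =>
        simp only [map_add, LinearMap.add_apply]
        exact ⟨by rw [hy.1, hz.1], by rw [hy.2, hz.2]⟩
      | tmul t b =>
        induction v with
        | zero => simp
        | add y z hy hz =>
          simp only [map_add]
          exact ⟨by rw [hy.1, hz.1], by rw [hy.2, hz.2]⟩
        | tmul r c =>
          rw [hmulBS, hω, hω, hω, hractS, hlactS]
          refine ⟨?_, ?_⟩
          · rw [(hχ b c).1, mul_assoc]
          · rw [(hχ b c).2, mul_left_comm]
  · intro hg
    obtain ⟨x, rfl⟩ := hωbij.2 g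
    obtain ⟨G, hG⟩ := (Module.Finite.fg_top : (⊤ : Submodule R B).FG)
    let φ₁ : B → B → (B →ₗ[R] N) →ₗ[R] N := fun b c =>
      LinearMap.applyₗ (mulB b c) - (ractN.flip c) ∘ₗ LinearMap.applyₗ b
    let φ₂ : B → B → (B →ₗ[R] N) →ₗ[R] N := fun b c =>
      LinearMap.applyₗ (mulB b c) - (lactN b) ∘ₗ LinearMap.applyₗ c
    have h₁ : ∀ b c x, (φ₁ b c).baseChange S x =
        ω x (mulBS (1 ⊗ₜ b) (1 ⊗ₜ c)) - ractS (ω x (1 ⊗ₜ b)) (1 ⊗ₜ c) := by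
      intro b c x
      induction x with
      | zero => simp
      | add y z hy hz =>
        simp only [map_add, LinearMap.add_apply, hy, hz]
        abel
      | tmul s χ => simp [hmulBS, hω, hractS, φ₁, TensorProduct.tmul_sub]
    have h₂ : ∀ b c x, (φ₂ b c).baseChange S x =
        ω x (mulBS (1 ⊗ₜ b) (1 ⊗ₜ c)) - lactS (1 ⊗ₜ b) (ω x (1 ⊗ₜ c)) := by
      intro b c x
      induction x with
      | zero => simp
      | add y z hy hz =>
        simp only [map_add, LinearMap.add_apply, hy, hz]
        abel
      | tmul s χ => simp [hmulBS, hω, hlactS, φ₂, TensorProduct.tmul_sub]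
    let φ : (G × G) × Bool → (B →ₗ[R] N) →ₗ[R] N := fun i =>
      if i.2 then φ₁ i.1.1 i.1.2 else φ₂ i.1.1 i.1.2
    obtain ⟨y, hy⟩ := flat_kernel_aux (S := S) (centSubmodule mulB lactN ractN) φ (by
      intro χ
      constructor
      · rintro h ⟨⟨b, c⟩, _ | _⟩
        · simpa [φ, φ₂, sub_eq_zero] using (h b c).2
        · simpa [φ, φ₁, sub_eq_zero] using (h b c).1
      · intro h
        have e₁ : mulB.compr₂ χ = ractN ∘ₗ χ := bilin_ext_aux _ hG _ _ (by
          intro b hb c hc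
          simpa [φ, φ₁, sub_eq_zero] using h ((⟨b, hb⟩, ⟨c, hc⟩), true))
        have e₂ : mulB.compr₂ χ = lactN.compl₂ χ := bilin_ext_aux _ hG _ _ (by
          intro b hb c hc
          simpa [φ, φ₂, sub_eq_zero] using h ((⟨b, hb⟩, ⟨c, hc⟩), false))
        intro b c
        exact ⟨LinearMap.congr_fun₂ e₁ b c, LinearMap.congr_fun₂ e₂ b c⟩) x (by
      rintro ⟨⟨b, c⟩, _ | _⟩
      · simpa [φ, h₂, sub_eq_zero] using (hg (1 ⊗ₜ b) (1 ⊗ₜ c)).2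
      · simpa [φ, h₁, sub_eq_zero] using (hg (1 ⊗ₜ b) (1 ⊗ₜ c)).1)
    exact ⟨y, by rw [LinearMap.comp_apply, hy]⟩
end

section
/- Let k be a field of characteristic zero, g a finite-dimensional semisimple Lie algebra over k, K a commutative associative unital k-algebra, and M a module over the Lie K-algebra g_K = g⊗_k K which is locally finite as a g-module (every element of M lies in a finite-dimensional g-submodule, where g acts via x ↦ x⊗1). Then every K-linear derivation of g_K with values in M is inner: for every K-linear map d : g_K → M with d([u,v]) = u·d(v) − v·d(u) for all u,v ∈ g_K, there exists m ∈ M such that d(u) = u·m for all u ∈ g_K. -/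
open TensorProduct


namespace Whitehead

open LieAlgebra LieModule Module

section

variable {k L W : Type*} [Field k] [CharZero k]
  [LieRing L] [LieAlgebra k L] [FiniteDimensional k L] [IsKilling k L]
  [AddCommGroup W] [Module k W] [LieRingModule L W] [LieModule k L W]

lemma derived_eq_top : (⁅(⊤ : LieIdeal k L), (⊤ : LieIdeal k L)⁆ : LieIdeal k L) = ⊤ := by
  set I : LieIdeal k L := ⁅(⊤ : LieIdeal k L), (⊤ : LieIdeal k L)⁆ with hI
  have hc := LieIdeal.isCompl_killingCompl I
  have hab : IsLieAbelian (LieIdeal.killingCompl k L I) := by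
    rw [LieSubmodule.lie_abelian_iff_lie_self_eq_bot, eq_bot_iff, ← hc.inf_eq_bot]
    exact le_inf (LieSubmodule.mono_lie le_top le_top) (LieSubmodule.lie_le_left _ _)
  have hb := IsKilling.ideal_eq_bot_of_isLieAbelian (LieIdeal.killingCompl k L I)
  have := hc.sup_eq_top
  rwa [hb, sup_bot_eq] at this

/-- The Casimir tensor of a representation with nonzero trace form. -/
lemma exists_casimir [FiniteDimensional k W] (h : traceForm k L W ≠ 0) :
    ∃ (n : ℕ) (e f : Fin n → L),
      (∀ (x : L) (B : L →ₗ[k] L →ₗ[k] W), ∑ i, (B ⁅x, e i⁆ (f i) + B (e i) ⁅x, f i⁆) = 0) ∧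
      ∑ i, traceForm k L W (e i) (f i) ≠ 0 := by
  set β := traceForm k L W with hβ
  have hinv := traceForm_lieInvariant k L W
  have hsymm := traceForm_comm k L W
  let S : LieIdeal k L := InvariantForm.orthogonal β hinv ⊤
  have hS : ∀ y, y ∈ S ↔ ∀ x, β x y = 0 := fun y => by
    simp [S, InvariantForm.mem_orthogonal]
  have hc := LieIdeal.isCompl_killingCompl S
  set J := LieIdeal.killingCompl k L S with hJ
  let β' : LinearMap.BilinForm k J.toSubmodule := β.restrict J.toSubmodule
  have hβ' : ∀ x y, β' x y = β x y := fun x y => rfl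
  have hsymm' : β'.IsSymm := ⟨fun x y => hsymm _ _⟩
  have hnd : β'.Nondegenerate := by
    refine hsymm'.isRefl.nondegenerate_iff_separatingLeft.mpr ?_
    intro x hx
    have hxS : (x : L) ∈ S := by
      rw [hS]
      intro z
      have hz : z ∈ S ⊔ J := by rw [hc.sup_eq_top]; trivial
      obtain ⟨s, hs, j, hj, rfl⟩ := (LieSubmodule.mem_sup _ _ _).1 hz
      rw [map_add, LinearMap.add_apply, hsymm s, (hS s).1 hs, hsymm j, zero_add]
      exact hx ⟨j, hj⟩
    have : (x : L) ∈ S ⊓ J := ⟨hxS, x.2⟩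
    rw [hc.inf_eq_bot] at this
    exact Subtype.ext (by simpa using this)
  let b := finBasis k J.toSubmodule
  let c := β'.dualBasis hnd b
  have hbc : β'.dualBasis hnd c = b := LinearMap.BilinForm.dualBasis_dualBasis hnd hsymm' b
  have expc : ∀ y ∈ J, y = ∑ j, β y (b j) • (c j : L) := by
    intro y hy
    have := congrArg (Subtype.val) (c.sum_repr ⟨y, hy⟩)
    simp only [c, LinearMap.BilinForm.dualBasis_repr_apply, hβ'] at this
    simpa [c] using this.symm
  have expb : ∀ y ∈ J, y = ∑ j, β y (c j) • (b j : L) := by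
    intro y hy
    have := congrArg (Subtype.val) ((β'.dualBasis hnd c).sum_repr ⟨y, hy⟩)
    simp only [LinearMap.BilinForm.dualBasis_repr_apply, hβ'] at this
    rw [hbc] at this
    simpa using this.symm
  refine ⟨_, fun i => (b i : L), fun i => (c i : L), ?_, ?_⟩
  · intro x B
    rw [Finset.sum_add_distrib]
    have h1 : ∀ i, B ⁅x, (b i : L)⁆ (c i) = ∑ j, β ⁅x, (b i : L)⁆ (c j) • B (b j) (c i) := by
      intro i
      conv_lhs => rw [expb ⁅x, (b i : L)⁆ (J.lie_mem (b i).2)]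
      simp
    have h2 : ∀ i, B (b i) ⁅x, (c i : L)⁆ = ∑ j, β ⁅x, (c i : L)⁆ (b j) • B (b i) (c j) := by
      intro i
      conv_lhs => rw [expc ⁅x, (c i : L)⁆ (J.lie_mem (c i).2)]
      simp
    simp only [h1, h2]
    rw [Finset.sum_comm (f := fun i j => β ⁅x, (b i : L)⁆ (c j) • B (b j) (c i)),
      ← Finset.sum_add_distrib]
    refine Finset.sum_eq_zero fun i _ => ?_
    rw [← Finset.sum_add_distrib]
    refine Finset.sum_eq_zero fun j _ => ?_
    rw [← add_smul, hinv, hsymm (b j), neg_add_cancel, zero_smul]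
  · have : ∀ i, β (b i : L) (c i) = 1 := by
      intro i
      have := LinearMap.BilinForm.apply_dualBasis_right hnd hsymm' b i i
      simpa [hβ'] using this
    simp only [this]
    simp only [Finset.sum_const, Finset.card_univ, Fintype.card_fin, nsmul_eq_mul, mul_one]
    intro h0
    have h0 : finrank k J.toSubmodule = 0 := by exact_mod_cast h0
    have hJ0 : J = ⊥ := by
      rw [← LieSubmodule.toSubmodule_eq_bot]
      exact Submodule.finrank_eq_zero.1 h0
    have hS1 : S = ⊤ := by
      have := hc.sup_eq_top
      rwa [hJ0, sup_bot_eq] at this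
    apply h
    ext x y
    exact (hS y).1 (by rw [hS1]; trivial) x

/-- Whitehead's first lemma, the irreducible case. -/
lemma inner_of_irred [FiniteDimensional k W]
    (hirr : ∀ N : LieSubmodule k L W, N = ⊥ ∨ N = ⊤)
    (δ : L →ₗ[k] W) (hδ : ∀ x y, δ ⁅x, y⁆ = ⁅x, δ y⁆ - ⁅y, δ x⁆) :
    ∃ m : W, ∀ x, δ x = ⁅x, m⁆ := by
  by_cases hs : Subsingleton W
  · exact ⟨0, fun x => Subsingleton.elim _ _⟩
  have hnt : Nontrivial W := not_subsingleton_iff_nontrivial.1 hs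
  by_cases h : traceForm k L W = 0
  · have hder : derivedSeries k L 1 = ⊤ := by
      simpa [derivedSeries_def] using derived_eq_top (k := k) (L := L)
    have hnil := isNilpotent_derivedSeries_of_traceForm_eq_zero (R := k) (L := L) (M := W) h
    have hnilL : LieModule.IsNilpotent L W := by
      rw [isNilpotent_iff_forall' (R := k)] at hnil ⊢
      intro x
      exact hnil ⟨x, by rw [hder]; trivial⟩
    have hmt : maxTrivSubmodule k L W = ⊤ := by
      refine (hirr _).resolve_left fun hb => ?_
      have := nontrivial_max_triv_of_isNilpotent k L W
      rw [hb] at this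
      exact not_subsingleton _ (inferInstance : Subsingleton (⊥ : LieSubmodule k L W))
    have htriv : ∀ (x : L) (w : W), ⁅x, w⁆ = 0 := fun x w =>
      (mem_maxTrivSubmodule k L W w).1 (by rw [hmt]; trivial) x
    refine ⟨0, fun x => ?_⟩
    rw [lie_zero]
    have hx : x ∈ (⁅(⊤ : LieIdeal k L), (⊤ : LieIdeal k L)⁆ : LieIdeal k L) := by
      rw [derived_eq_top]; trivial
    rw [← LieSubmodule.mem_toSubmodule, LieSubmodule.lieIdeal_oper_eq_linear_span'] at hx
    refine Submodule.span_induction (p := fun y _ => δ y = 0) ?_ (map_zero δ) ?_ ?_ hx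
    · rintro _ ⟨a, -, b, -, rfl⟩
      rw [hδ, htriv, htriv, sub_zero]
    · intro a b _ _ ha hb; rw [map_add, ha, hb, add_zero]
    · intro t a _ ha; rw [map_smul, ha, smul_zero]
  · obtain ⟨n, e, f, hB, htr⟩ := exists_casimir h
    let Ω : W →ₗ[k] W := ∑ i, toEnd k L W (e i) ∘ₗ toEnd k L W (f i)
    have hΩ : ∀ w, Ω w = ∑ i, ⁅e i, ⁅f i, w⁆⁆ := fun w => by simp [Ω]
    have hcomm : ∀ (x : L) (w : W), Ω ⁅x, w⁆ = ⁅x, Ω w⁆ := by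
      intro x w
      let B : L →ₗ[k] L →ₗ[k] W := LinearMap.mk₂ k (fun a b => ⁅a, ⁅b, w⁆⁆)
        (by intros; simp) (by intros; simp) (by intros; simp) (by intros; simp)
      have := hB x B
      rw [hΩ, hΩ, lie_sum, eq_comm, ← sub_eq_zero, ← this, ← Finset.sum_sub_distrib]
      refine Finset.sum_congr rfl fun i _ => ?_
      simp only [B, LinearMap.mk₂_apply, lie_lie, lie_sub]
      abel
    have hΩ0 : Ω ≠ 0 := by
      intro h0
      apply htr
      have : LinearMap.trace k W Ω = 0 := by rw [h0, map_zero]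
      rw [← this]
      simp [Ω, traceForm_apply_apply]
    let N : LieSubmodule k L W :=
      { LinearMap.ker Ω with
        lie_mem := by
          intro x w hw
          have hw : Ω w = 0 := hw
          change Ω ⁅x, w⁆ = 0
          rw [hcomm, hw, lie_zero] }
    have hN : LinearMap.ker Ω = ⊥ := by
      rcases hirr N with h1 | h1
      · rw [← LieSubmodule.toSubmodule_eq_bot] at h1
        exact h1
      · exfalso
        apply hΩ0
        ext w
        have : w ∈ N := by rw [h1]; trivial
        exact this
    have hinj : Function.Injective Ω := LinearMap.ker_eq_bot.1 hN
    have hsurj : Function.Surjective Ω := LinearMap.injective_iff_surjective.1 hinj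
    obtain ⟨m, hm⟩ := hsurj (∑ i, ⁅e i, δ (f i)⁆)
    refine ⟨m, fun x => hinj ?_⟩
    rw [hcomm, hm]
    let B : L →ₗ[k] L →ₗ[k] W := LinearMap.mk₂ k (fun a b => ⁅a, δ b⁆)
      (by intros; simp) (by intros; simp) (by intros; simp) (by intros; simp)
    have := hB x B
    rw [hΩ, lie_sum, eq_comm, ← sub_eq_zero, ← this, ← Finset.sum_sub_distrib]
    refine Finset.sum_congr rfl fun i _ => ?_
    simp only [B, LinearMap.mk₂_apply, lie_lie, lie_sub, hδ]
    abel

end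

/-- Whitehead's first lemma. -/
lemma inner_of_finrank {k L : Type*} [Field k] [CharZero k]
    [LieRing L] [LieAlgebra k L] [FiniteDimensional k L] [IsKilling k L] (n : ℕ) :
    ∀ (W : Type*) [AddCommGroup W] [Module k W] [LieRingModule L W] [LieModule k L W]
      [FiniteDimensional k W] (_ : finrank k W = n)
      (δ : L →ₗ[k] W) (_ : ∀ x y, δ ⁅x, y⁆ = ⁅x, δ y⁆ - ⁅y, δ x⁆),
      ∃ m : W, ∀ x, δ x = ⁅x, m⁆ := by
  induction n using Nat.strong_induction_on with
  | _ n ih =>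
    intro W _ _ _ _ _ hn δ hδ
    by_cases hirr : ∀ N : LieSubmodule k L W, N = ⊥ ∨ N = ⊤
    · exact inner_of_irred hirr δ hδ
    push Not at hirr
    obtain ⟨N, hN0, hN1⟩ := hirr
    have hlt : finrank k N.toSubmodule < n := by
      rw [← hn]
      exact Submodule.finrank_lt (by rwa [ne_eq, LieSubmodule.toSubmodule_eq_top])
    have hpos : 0 < finrank k N.toSubmodule := by
      rw [Nat.pos_iff_ne_zero, ne_eq, Submodule.finrank_eq_zero,
        LieSubmodule.toSubmodule_eq_bot]
      exact hN0
    have hq : finrank k (W ⧸ N) < n := by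
      have := Submodule.finrank_quotient_add_finrank N.toSubmodule
      have h2 : finrank k (W ⧸ N) = finrank k (W ⧸ N.toSubmodule) := rfl
      omega
    let π := LieSubmodule.Quotient.mk' N
    have : FiniteDimensional k (W ⧸ N) :=
      inferInstanceAs (FiniteDimensional k (W ⧸ N.toSubmodule))
    obtain ⟨q, hqm⟩ := ih _ hq (W ⧸ N) rfl ((π : W →ₗ[k] W ⧸ N) ∘ₗ δ) (by
      intro x y
      simp [hδ])
    obtain ⟨w, rfl⟩ := LieSubmodule.Quotient.surjective_mk' N q
    have hmem : ∀ x, δ x - ⁅x, w⁆ ∈ N.toSubmodule := by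
      intro x
      have := hqm x
      rw [LieSubmodule.mem_toSubmodule, ← LieSubmodule.Quotient.mk_eq_zero, map_sub, sub_eq_zero]
      have h3 : π (δ x) = ⁅x, π w⁆ := this
      rw [← LieModuleHom.map_lie] at h3
      exact h3
    let δ' : L →ₗ[k] N := LinearMap.codRestrict N.toSubmodule
      (δ - (toEnd k L W : L →ₗ[k] End k W).flip w) hmem
    have hδ' : ∀ x, (δ' x : W) = δ x - ⁅x, w⁆ := fun x => rfl
    obtain ⟨m, hm⟩ := ih _ hlt N rfl δ' (by
      intro x y
      apply Subtype.ext
      simp only [hδ', LieSubmodule.coe_bracket, LieSubmodule.coe_sub, hδ, lie_sub, lie_lie]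
      abel)
    refine ⟨w + m, fun x => ?_⟩
    have := congrArg Subtype.val (hm x)
    rw [hδ'] at this
    rw [lie_add, ← LieSubmodule.coe_bracket, ← this]
    abel

end Whitehead

/-- Let `k` be a field of characteristic zero, `g` a
finite-dimensional semisimple Lie algebra over `k`, `K` a commutative `k`-algebra,
and `M` a module over the Lie `K`-algebra `g_K = K ⊗[k] g` which is locally finite
as a `g`-module (where `g` acts through `x ↦ 1 ⊗ x`): every `m ∈ M` lies in a
finite-dimensional `k`-subspace stable under the action of `g`.  Then every
`K`-linear derivation of `g_K` with values in `M` is inner. -/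
theorem stmt_18 {k g K M : Type*} [Field k] [CharZero k]
    [LieRing g] [LieAlgebra k g] [FiniteDimensional k g]
    [LieAlgebra.IsSemisimple k g]
    [CommRing K] [Algebra k K]
    [AddCommGroup M] [Module K M] [Module k M] [IsScalarTower k K M]
    [LieRingModule (K ⊗[k] g) M] [LieModule K (K ⊗[k] g) M]
    (hlf : ∀ m : M, ∃ W : Submodule k M,
      m ∈ W ∧ FiniteDimensional k ↥W ∧
        ∀ (x : g), ∀ w ∈ W, ⁅((1 : K) ⊗ₜ[k] x : K ⊗[k] g), w⁆ ∈ W) :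
    ∀ d : (K ⊗[k] g) →ₗ[K] M,
      (∀ u v : K ⊗[k] g, d ⁅u, v⁆ = ⁅u, d v⁆ - ⁅v, d u⁆) →
      ∃ m : M, ∀ u : K ⊗[k] g, d u = ⁅u, m⁆ := by
  intro d hd
  let φ : g →ₗ⁅k⁆ K ⊗[k] g :=
    { TensorProduct.mk k K g 1 with
      map_lie' := by
        intro x y
        change (1 : K) ⊗ₜ[k] ⁅x, y⁆ = ⁅(1 : K) ⊗ₜ[k] x, (1 : K) ⊗ₜ[k] y⁆
        rw [LieAlgebra.ExtendScalars.bracket_tmul, one_mul] }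
  have hφ : ∀ x, φ x = (1 : K) ⊗ₜ[k] x := fun x => rfl
  letI : LieRingModule g M := LieRingModule.compLieHom M φ
  have hact : ∀ (x : g) (m : M), ⁅x, m⁆ = ⁅(1 : K) ⊗ₜ[k] x, m⁆ := fun x m => rfl
  haveI : LieModule k g M :=
    { smul_lie := by
        intro t x m
        rw [hact, hact, ← algebraMap_smul K t ⁅(1 : K) ⊗ₜ[k] x, m⁆, ← smul_lie,
          algebraMap_smul, TensorProduct.tmul_smul]
      lie_smul := by
        intro t x m
        rw [hact, hact, ← algebraMap_smul K t m, lie_smul, algebraMap_smul] }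
  choose W hW1 hW2 hW3 using hlf
  let b := Module.finBasis k g
  let N : LieSubmodule k g M :=
    { (⨆ i, W (d (1 ⊗ₜ[k] b i)) : Submodule k M) with
      lie_mem := by
        intro x m hm
        have hle : (⨆ i, W (d (1 ⊗ₜ[k] b i))) ≤
            (⨆ i, W (d (1 ⊗ₜ[k] b i))).comap (LieModule.toEnd k g M x) := by
          refine iSup_le fun i w hw => ?_
          exact Submodule.mem_iSup_of_mem i (hW3 _ x w hw)
        exact hle hm }
  have hNfd : FiniteDimensional k N :=
    inferInstanceAs (FiniteDimensional k (⨆ i, W (d (1 ⊗ₜ[k] b i)) : Submodule k M))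
  let d₀ : g →ₗ[k] M := (d.restrictScalars k) ∘ₗ (TensorProduct.mk k K g 1)
  have hd₀ : ∀ x, d₀ x = d (1 ⊗ₜ[k] x) := fun x => rfl
  have hmem : ∀ x, d₀ x ∈ N.toSubmodule := by
    intro x
    rw [← b.sum_repr x, map_sum]
    refine Submodule.sum_mem _ fun i _ => ?_
    rw [map_smul]
    refine Submodule.smul_mem _ _ ?_
    exact Submodule.mem_iSup_of_mem i (hW1 _)
  let δ : g →ₗ[k] N := LinearMap.codRestrict N.toSubmodule d₀ hmem
  have hδ : ∀ x, (δ x : M) = d (1 ⊗ₜ[k] x) := fun x => rfl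
  obtain ⟨m, hm⟩ := Whitehead.inner_of_finrank _ N rfl δ (by
    intro x y
    apply Subtype.ext
    rw [LieSubmodule.coe_sub, LieSubmodule.coe_bracket, LieSubmodule.coe_bracket, hδ, hδ, hδ,
      hact, hact, ← hd, LieAlgebra.ExtendScalars.bracket_tmul, one_mul])
  refine ⟨m, fun u => ?_⟩
  induction u using TensorProduct.induction_on with
  | zero => simp
  | add a b ha hb => rw [map_add, ha, hb, add_lie]
  | tmul s x =>
    have h1 : s ⊗ₜ[k] x = s • ((1 : K) ⊗ₜ[k] x) := by
      rw [TensorProduct.smul_tmul', smul_eq_mul, mul_one]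
    have h2 := congrArg Subtype.val (hm x)
    rw [hδ, LieSubmodule.coe_bracket, hact] at h2
    rw [h1, map_smul, smul_lie, h2]
end
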